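/- Let T be a finite tree on n ≥ 4 vertices with maximum degree at least 3, and let l1 and l2 denote the number of vertices of T of degree 1 and of degree 2, respectively. Then there exists a set F of exactly ⌈(2·l1 + l2)/2⌉ unordered pairs of distinct vertices of T that are not edges of T such that every vertex of the graph T + F has degree at least 3. -/

import Mathlib

/-!
Let `L` be the set of leaves and `S` the set of vertices of degree 2. A degree count gives
`|L| ≥ 3`, and no two leaves are adjacent, so a cyclic permutation of `L` yields `|L|` non-edges
forming a cycle through `L`; they raise every leaf to degree 3
(the permutation comes from `exists_leaf_cycle`).

It remains to cover `S` by `⌈|S|/2⌉` non-edges, each meeting `S`; such edges are automatically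
different from those of the cycle. If `|S|` is even, `S` has a perfect matching in the complement
of `T` (`exists_matching`) unless `S` consists of two adjacent vertices: pairs of non-adjacent
vertices can be split off one at a time as each vertex of `S` has at most two neighbours, and for
`|S| = 4` the three pairings cannot all be blocked, since this would need a triangle or a vertex
of degree 3. If `|S|` is odd, one vertex of `S` is set aside and joined to any non-neighbour.

In the exceptional case `S = {a, b}` with `a` adjacent to `b`, the vertices `a` and `b` are
spliced into the cycle: some cycle edge `xy` is replaced by the two edges `xa` and `yb`. As `a` and
`b` have at most one neighbouring leaf each and there are at least three cycle edges, `xy` can be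
chosen so that both new edges are non-edges of `T`.
-/

/-- The degree of a vertex `v` in a simple graph `G`, as the cardinality of its
neighbor set. -/
noncomputable def degN {V : Type*} (G : SimpleGraph V) (v : V) : ℕ :=
  (G.neighborSet v).ncard

/-- A finite simple graph is 3-vertex-connected if removing any set of at most two
vertices leaves a connected induced subgraph. -/
def ThreeConnected {V : Type*} [Fintype V] (G : SimpleGraph V) : Prop :=
  ∀ S : Finset V, S.card ≤ 2 → (G.induce ((S : Set V)ᶜ)).Connected

/-! ### Degrees and leaves of a tree -/

lemma three_le_degN {V : Type*} [Fintype V] (G : SimpleGraph V) {v b c d : V}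
    (hb : G.Adj v b) (hc : G.Adj v c) (hd : G.Adj v d) (hbc : b ≠ c) (hbd : b ≠ d)
    (hcd : c ≠ d) : 3 ≤ degN G v := by
  classical
  have h3 : (({b, c, d} : Finset V) : Set V).ncard = 3 := by
    rw [Set.ncard_coe_finset, Finset.card_eq_three]
    exact ⟨b, c, d, hbc, hbd, hcd, rfl⟩
  rw [degN, ← h3]
  apply Set.ncard_le_ncard _ (Set.toFinite _)
  intro x hx
  simp only [Finset.coe_insert, Finset.coe_singleton, Set.mem_insert_iff,
    Set.mem_singleton_iff] at hx
  rcases hx with rfl | rfl | rfl <;> assumption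

lemma degN_eq_degree {V : Type*} [Fintype V] (G : SimpleGraph V) [DecidableRel G.Adj] (v : V) :
    degN G v = G.degree v := by
  rw [degN, Set.ncard_eq_toFinset_card', Set.toFinset_card, SimpleGraph.card_neighborSet_eq_degree]

/-- The endpoints `p ∈ P` of new edges at `v` all count towards the degree, since the
added edges are non-edges of `T`. -/
lemma degN_add_le {V : Type*} [Fintype V] (T : SimpleGraph V) (F : Finset (Sym2 V))
    (hF : ∀ e ∈ F, ¬ e.IsDiag ∧ e ∉ T.edgeSet) (v : V) (P : Finset V)
    (hP : ∀ p ∈ P, s(v, p) ∈ F) :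
    degN T v + P.card ≤ degN (T ⊔ SimpleGraph.fromEdgeSet (F : Set (Sym2 V))) v := by
  rw [degN, degN, ← Set.ncard_coe_finset P, ← Set.ncard_union_eq]
  · apply Set.ncard_le_ncard _ (Set.toFinite _)
    rintro x (hx | hx)
    · exact Or.inl hx
    · have h1 := hP x hx
      have h2 := (hF _ h1).1
      refine Or.inr ?_
      rw [SimpleGraph.fromEdgeSet_adj]
      exact ⟨h1, by simpa using h2⟩
  · rw [Set.disjoint_left]
    intro x hx hxP
    exact (hF _ (hP x hxP)).2 hx

lemma one_le_degN {V : Type*} [Fintype V] (T : SimpleGraph V) (hT : T.IsTree)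
    (hn : 4 ≤ Fintype.card V) (v : V) : 1 ≤ degN T v := by
  classical
  have : Nontrivial V := Fintype.one_lt_card_iff_nontrivial.mp (by omega)
  rw [degN_eq_degree]
  exact hT.connected.preconnected.degree_pos_of_nontrivial v

/-- The sum of `deg v - 2` over the tree is `-2`, so a vertex of degree at least 3 forces at
least three leaves. -/
lemma three_le_card_leaves {V : Type*} [Fintype V] (T : SimpleGraph V) (hT : T.IsTree)
    (hn : 4 ≤ Fintype.card V) (hdeg3 : ∃ v : V, 3 ≤ degN T v) :
    3 ≤ (Finset.univ.filter (fun v => degN T v = 1)).card := by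
  classical
  obtain ⟨w, hw⟩ := hdeg3
  have h1 := T.sum_degrees_eq_twice_card_edges
  have h2 := hT.card_edgeFinset
  simp only [← degN_eq_degree] at h1
  have h3 : ∑ v : V, (2 + if v = w then 1 else 0) ≤
      ∑ v : V, (degN T v + if degN T v = 1 then 1 else 0) := by
    apply Finset.sum_le_sum
    intro v _
    have := one_le_degN T hT hn v
    by_cases hv : v = w
    · subst hv
      simp only [if_true]
      omega
    · simp only [hv, if_false]
      split_ifs <;> omega
  rw [Finset.sum_add_distrib, Finset.sum_add_distrib,
    ← Finset.card_filter (fun v => degN T v = 1), Finset.sum_ite_eq' Finset.univ w] at h3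
  simp only [Finset.sum_const, Finset.card_univ, smul_eq_mul, Finset.mem_univ, if_true] at h3
  omega

lemma degN_eq_one_unique {V : Type*} [Fintype V] (T : SimpleGraph V) {u x y : V}
    (hu : degN T u = 1) (hx : T.Adj u x) (hy : T.Adj u y) : x = y := by
  obtain ⟨z, hz⟩ := Set.ncard_eq_one.mp hu
  have h1 : x ∈ T.neighborSet u := hx
  have h2 : y ∈ T.neighborSet u := hy
  rw [hz] at h1 h2
  rw [h1, h2]

/-- Two adjacent leaves would form a connected component. -/
lemma leaves_not_adj {V : Type*} [Fintype V] (T : SimpleGraph V) (hT : T.IsTree)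
    (hn : 4 ≤ Fintype.card V) {u v : V} (hu : degN T u = 1) (hv : degN T v = 1) :
    ¬ T.Adj u v := by
  classical
  intro huv
  have key : ∀ x, x = u ∨ x = v := by
    intro x
    have hr := hT.connected.preconnected u x
    rw [SimpleGraph.reachable_iff_reflTransGen] at hr
    induction hr with
    | refl => exact Or.inl rfl
    | tail _ hbc ih =>
      rcases ih with rfl | rfl
      · exact Or.inr (degN_eq_one_unique T hu hbc huv)
      · exact Or.inl (degN_eq_one_unique T hv hbc huv.symm)
  have : (Finset.univ : Finset V) ⊆ {u, v} := by
    intro x _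
    simpa using key x
  have h := Finset.card_le_card this
  have h' := Finset.card_le_two (a := u) (b := v)
  rw [Finset.card_univ] at h
  omega

lemma no_triangle {V : Type*} (T : SimpleGraph V) (hT : T.IsTree) {a b c : V}
    (hab : T.Adj a b) (hac : T.Adj a c) (hbc : T.Adj b c) : False := by
  refine hT.isAcyclic (.cons hab (.cons hbc (.cons hac.symm .nil))) ?_
  rw [SimpleGraph.Walk.isCycle_def]
  simp [SimpleGraph.Walk.isTrail_def, hab.ne, hab.ne', hac.ne, hac.ne', hbc.ne]

/-! ### The cycle through the leaves -/

/-- A permutation `f` cycling through `L`, without fixed points or 2-cycles there because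
`|L| ≥ 3`; hence the pairs `{v, f v}` with `v ∈ L` are distinct and each `v ∈ L` lies in two of
them. -/
lemma exists_leaf_cycle {V : Type*} [Fintype V] [DecidableEq V] (L : Finset V) (hL : 3 ≤ L.card) :
    ∃ f : Equiv.Perm V, (∀ v ∈ L, f v ∈ L) ∧ (∀ v ∈ L, f.symm v ∈ L) ∧
      (∀ v ∈ L, f v ≠ v) ∧ (∀ v ∈ L, f (f v) ≠ v) := by
  obtain ⟨f, hf, -⟩ := L.exists_cycleOn
  have h1 : ∀ v ∈ L, f v ∈ L := fun v hv => hf.apply_mem_iff.mpr hv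
  refine ⟨f, h1, ?_, ?_, ?_⟩
  · intro v hv
    rw [← Finset.mem_coe, ← hf.apply_mem_iff]
    simpa using hv
  · intro v hv h
    have := (hf.pow_apply_eq (n := 1) hv).mp (by simpa using h)
    have := Nat.le_of_dvd (by norm_num) this
    omega
  · intro v hv h
    have := (hf.pow_apply_eq (n := 2) hv).mp (by simpa [pow_two] using h)
    have := Nat.le_of_dvd (by norm_num) this
    omega

/-! ### Covering the vertices of degree 2 by non-edges -/

lemma indep_of_subset_pair {V : Type*} [DecidableEq V] (T : SimpleGraph V) {c d : V}
    (h : ¬ T.Adj c d) {U : Finset V} (hU : U ⊆ {c, d}) : ∀ x ∈ U, ∀ y ∈ U, ¬ T.Adj x y := by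
  intro x hx y hy
  have hx := hU hx
  have hy := hU hy
  rw [Finset.mem_insert, Finset.mem_singleton] at hx hy
  rcases hx with rfl | rfl <;> rcases hy with rfl | rfl
  · exact T.irrefl
  · exact h
  · exact fun h' => h h'.symm
  · exact T.irrefl

/-- Blocking all three pairings of four vertices takes an edge from each pairing, and three such
edges form a triangle or a star. -/
lemma exists_split_four {V : Type*} [DecidableEq V] (T : SimpleGraph V)
    (htri : ∀ a b c, T.Adj a b → T.Adj a c → ¬ T.Adj b c) (S : Finset V) (hS : S.card = 4)
    (hstar : ∀ a ∈ S, ∀ b c d, T.Adj a b → T.Adj a c → T.Adj a d → b = c ∨ b = d ∨ c = d) :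
    ∃ a ∈ S, ∃ b ∈ S, a ≠ b ∧ ¬ T.Adj a b ∧
      ∀ x ∈ (S.erase a).erase b, ∀ y ∈ (S.erase a).erase b, ¬ T.Adj x y := by
  obtain ⟨a, ha⟩ : S.Nonempty := Finset.card_pos.mp (by omega)
  have hc : (S.erase a).card = 3 := by rw [Finset.card_erase_of_mem ha]; omega
  obtain ⟨b, c, d, hbc, hbd, hcd, hE⟩ := Finset.card_eq_three.mp hc
  have hSe : S = {a, b, c, d} := by rw [← Finset.insert_erase ha, hE]
  have haE : a ∉ ({b, c, d} : Finset V) := by rw [← hE]; simp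
  simp only [Finset.mem_insert, Finset.mem_singleton, not_or] at haE
  obtain ⟨hab, hac, had⟩ := haE
  subst hSe
  -- One of the three pairings consists of two non-edges.
  have hcases : (¬ T.Adj a b ∧ ¬ T.Adj c d) ∨ (¬ T.Adj a c ∧ ¬ T.Adj b d) ∨
      (¬ T.Adj a d ∧ ¬ T.Adj b c) := by
    have sa := hstar a (by simp) b c d
    have sb := hstar b (by simp) a c d
    have sc := hstar c (by simp) a b d
    have sd := hstar d (by simp) a b c
    have t1 := htri a b c
    have t2 := htri a b d
    have t3 := htri a c d
    have t4 := htri b c d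
    rw [T.adj_comm b a] at sb
    rw [T.adj_comm c a, T.adj_comm c b] at sc
    rw [T.adj_comm d a, T.adj_comm d b, T.adj_comm d c] at sd
    grind
  rcases hcases with ⟨h1, h2⟩ | ⟨h1, h2⟩ | ⟨h1, h2⟩
  · refine ⟨a, by simp, b, by simp, hab, h1, indep_of_subset_pair T h2 ?_⟩
    intro x hx
    clear * - hx
    grind
  · refine ⟨a, by simp, c, by simp, hac, h1, indep_of_subset_pair T h2 ?_⟩
    intro x hx
    clear * - hx
    grind
  · refine ⟨a, by simp, d, by simp, had, h1, indep_of_subset_pair T h2 ?_⟩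
    intro x hx
    clear * - hx
    grind

/-- A set of `2n` vertices of degree at most 2 in a triangle-free graph has a perfect matching
in the complement, except for `n = 1` when the two vertices are adjacent. -/
lemma exists_matching {V : Type*} [DecidableEq V] (T : SimpleGraph V)
    (htri : ∀ a b c, T.Adj a b → T.Adj a c → ¬ T.Adj b c) (n : ℕ) :
    ∀ S : Finset V, S.card = 2 * n →
      (∀ a ∈ S, ∀ b c d, T.Adj a b → T.Adj a c → T.Adj a d → b = c ∨ b = d ∨ c = d) →
      (n = 1 → ∀ a ∈ S, ∀ b ∈ S, ¬ T.Adj a b) →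
      ∃ M : Finset (Sym2 V), M.card = n ∧
        (∀ e ∈ M, ¬ e.IsDiag ∧ e ∉ T.edgeSet ∧ ∀ v ∈ e, v ∈ S) ∧
        ∀ v ∈ S, ∃ p, s(v, p) ∈ M := by
  induction n with
  | zero =>
    intro S hS _ _
    have : S = ∅ := by simpa using hS
    subst this
    exact ⟨∅, by simp⟩
  | succ n ih =>
    intro S hS hstar hone
    -- A pair to split off so that the rest is not the exceptional case.
    obtain ⟨a, ha, b, hb, hab, hadj, hrest⟩ : ∃ a ∈ S, ∃ b ∈ S, a ≠ b ∧ ¬ T.Adj a b ∧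
        (n = 1 → ∀ x ∈ (S.erase a).erase b, ∀ y ∈ (S.erase a).erase b, ¬ T.Adj x y) := by
      rcases Nat.lt_trichotomy n 1 with hn | hn | hn
      · have hn0 : n = 0 := by omega
        subst hn0
        obtain ⟨a, b, hab, rfl⟩ := Finset.card_eq_two.mp hS
        exact ⟨a, by simp, b, by simp, hab, hone rfl a (by simp) b (by simp), by simp⟩
      · subst hn
        exact (exists_split_four T htri S hS hstar).imp fun a ⟨ha, b, hb, hab, h1, h2⟩ =>
          ⟨ha, b, hb, hab, h1, fun _ => h2⟩
      · obtain ⟨a, ha⟩ : S.Nonempty := Finset.card_pos.mp (by omega)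
        have hc : 2 < (S.erase a).card := by rw [Finset.card_erase_of_mem ha]; omega
        obtain ⟨b, c, d, hb, hc, hd, hbc, hbd, hcd⟩ := Finset.two_lt_card_iff.mp hc
        rw [Finset.mem_erase] at hb hc hd
        have sa := hstar a ha b c d
        by_cases h1 : T.Adj a b
        · by_cases h2 : T.Adj a c
          · by_cases h3 : T.Adj a d
            · have := sa h1 h2 h3
              tauto
            · exact ⟨a, ha, d, hd.2, hd.1.symm, h3, by omega⟩
          · exact ⟨a, ha, c, hc.2, hc.1.symm, h2, by omega⟩
        · exact ⟨a, ha, b, hb.2, hb.1.symm, h1, by omega⟩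
    have hb' : b ∈ S.erase a := Finset.mem_erase.mpr ⟨hab.symm, hb⟩
    obtain ⟨M, hMc, hM, hcov⟩ := ih ((S.erase a).erase b)
      (by rw [Finset.card_erase_of_mem hb', Finset.card_erase_of_mem ha]; omega)
      (fun x hx => hstar x (Finset.mem_of_mem_erase (Finset.mem_of_mem_erase hx))) hrest
    have hnot : s(a, b) ∉ M := by
      intro h
      have := (hM _ h).2.2 a (Sym2.mem_mk_left a b)
      simp at this
    refine ⟨insert s(a, b) M, by rw [Finset.card_insert_of_notMem hnot, hMc], ?_, ?_⟩
    · intro e he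
      rcases Finset.mem_insert.mp he with rfl | he
      · refine ⟨by simpa using hab, hadj, ?_⟩
        intro v hv
        rcases Sym2.mem_iff.mp hv with rfl | rfl <;> assumption
      · obtain ⟨h1, h2, h3⟩ := hM e he
        exact ⟨h1, h2, fun v hv =>
          Finset.mem_of_mem_erase (Finset.mem_of_mem_erase (h3 v hv))⟩
    · intro v hv
      by_cases hva : v = a
      · exact ⟨b, by simp [hva]⟩
      by_cases hvb : v = b
      · exact ⟨a, by simp [hvb, Sym2.eq_swap]⟩
      obtain ⟨p, hp⟩ := hcov v (by simp [hva, hvb, hv])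
      exact ⟨p, Finset.mem_insert_of_mem hp⟩

/-- Unless the degree-2 vertices are exactly two adjacent vertices, they are covered by
`⌈l₂ / 2⌉` non-edges, each containing a degree-2 vertex. -/
lemma exists_cover {V : Type*} [Fintype V] [DecidableEq V] (T : SimpleGraph V) (hT : T.IsTree)
    (hn : 4 ≤ Fintype.card V) (S : Finset V) (hS : ∀ v ∈ S, degN T v = 2)
    (hgood : S.card = 2 → ∀ a ∈ S, ∀ b ∈ S, ¬ T.Adj a b) :
    ∃ M : Finset (Sym2 V), M.card = (S.card + 1) / 2 ∧
      (∀ e ∈ M, ¬ e.IsDiag ∧ e ∉ T.edgeSet ∧ ∃ v ∈ e, v ∈ S) ∧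
      ∀ v ∈ S, ∃ p, s(v, p) ∈ M := by
  have htri : ∀ a b c, T.Adj a b → T.Adj a c → ¬ T.Adj b c :=
    fun a b c h1 h2 h3 => no_triangle T hT h1 h2 h3
  have hstar : ∀ a ∈ S, ∀ b c d, T.Adj a b → T.Adj a c → T.Adj a d →
      b = c ∨ b = d ∨ c = d := by
    intro a ha b c d hb hc hd
    by_contra! h
    have := three_le_degN T hb hc hd h.1 h.2.1 h.2.2
    have := hS a ha
    omega
  have hmem : ∀ e : Sym2 V, ∃ v, v ∈ e := fun e => ⟨e.out.1, e.out_fst_mem⟩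
  rcases Nat.even_or_odd' S.card with ⟨k, hk | hk⟩
  · obtain ⟨M, hMc, hM, hcov⟩ := exists_matching T htri k S hk hstar
      (fun h => hgood (by omega))
    refine ⟨M, by omega, fun e he => ?_, hcov⟩
    obtain ⟨h1, h2, h3⟩ := hM e he
    obtain ⟨v, hv⟩ := hmem e
    exact ⟨h1, h2, v, hv, h3 v hv⟩
  · obtain ⟨d, hd, hrest⟩ : ∃ d ∈ S, k = 1 → ∀ a ∈ S.erase d, ∀ b ∈ S.erase d,
        ¬ T.Adj a b := by
      by_cases hk1 : k = 1
      · obtain ⟨a, b, c, hab, hac, hbc, rfl⟩ := Finset.card_eq_three.mp (by omega : S.card = 3)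
        have hcases : ¬ T.Adj a b ∨ ¬ T.Adj a c ∨ ¬ T.Adj b c := by
          have := htri a b c
          tauto
        rcases hcases with h | h | h
        · refine ⟨c, by simp, fun _ => indep_of_subset_pair T h ?_⟩
          intro x hx
          clear * - hx
          grind
        · refine ⟨b, by simp, fun _ => indep_of_subset_pair T h ?_⟩
          intro x hx
          clear * - hx
          grind
        · refine ⟨a, by simp, fun _ => indep_of_subset_pair T h ?_⟩
          intro x hx
          clear * - hx
          grind
      · obtain ⟨d, hd⟩ : S.Nonempty := Finset.card_pos.mp (by omega)
        exact ⟨d, hd, fun h => absurd h hk1⟩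
    -- The vertex set aside has at most two neighbours among at least three other vertices.
    obtain ⟨p, hpd, hp⟩ : ∃ p, p ≠ d ∧ ¬ T.Adj d p := by
      have hc : 2 < ((Finset.univ : Finset V).erase d).card := by
        rw [Finset.card_erase_of_mem (Finset.mem_univ d), Finset.card_univ]; omega
      obtain ⟨x, y, z, hx, hy, hz, hxy, hxz, hyz⟩ := Finset.two_lt_card_iff.mp hc
      by_contra! h
      have := hstar d hd x y z (h x (Finset.ne_of_mem_erase hx))
        (h y (Finset.ne_of_mem_erase hy)) (h z (Finset.ne_of_mem_erase hz))
      tauto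
    obtain ⟨M, hMc, hM, hcov⟩ := exists_matching T htri k (S.erase d)
      (by rw [Finset.card_erase_of_mem hd]; omega)
      (fun a ha => hstar a (Finset.mem_of_mem_erase ha)) hrest
    have hnot : s(d, p) ∉ M := by
      intro h
      have := (hM _ h).2.2 d (Sym2.mem_mk_left d p)
      simp at this
    refine ⟨insert s(d, p) M, by rw [Finset.card_insert_of_notMem hnot]; omega, ?_, ?_⟩
    · intro e he
      rcases Finset.mem_insert.mp he with rfl | he
      · exact ⟨by simpa using hpd.symm, hp, d, Sym2.mem_mk_left d p, hd⟩
      · obtain ⟨h1, h2, h3⟩ := hM e he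
        obtain ⟨v, hv⟩ := hmem e
        exact ⟨h1, h2, v, hv, Finset.mem_of_mem_erase (h3 v hv)⟩
    · intro v hv
      by_cases hvd : v = d
      · exact ⟨p, by simp [hvd]⟩
      obtain ⟨q, hq⟩ := hcov v (by simp [hvd, hv])
      exact ⟨q, Finset.mem_insert_of_mem hq⟩

/-! ### The augmenting set -/

/-- For every tree `T` on `n ≥ 4` vertices with maximum degree at least 3 there is an
augmenting set of exactly `⌈(2·l₁ + l₂)/2⌉` non-edges whose addition gives every
vertex degree at least 3. -/
theorem nonpath_augmentation_min_degree_three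
    {V : Type*} [Fintype V] (T : SimpleGraph V) (hT : T.IsTree)
    (hn : 4 ≤ Fintype.card V)
    (hdeg3 : ∃ v : V, 3 ≤ degN T v) :
    ∃ F : Finset (Sym2 V),
      (∀ e ∈ F, ¬ e.IsDiag ∧ e ∉ T.edgeSet) ∧
      F.card = (2 * (Finset.univ.filter (fun v => degN T v = 1)).card
          + (Finset.univ.filter (fun v => degN T v = 2)).card + 1) / 2 ∧
      ∀ v : V, 3 ≤ degN (T ⊔ SimpleGraph.fromEdgeSet (F : Set (Sym2 V))) v := by
  classical
  -- It suffices to give every leaf two new neighbours and every degree-2 vertex one.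
  suffices h : ∃ F : Finset (Sym2 V),
      (∀ e ∈ F, ¬ e.IsDiag ∧ e ∉ T.edgeSet) ∧
      F.card = (2 * (Finset.univ.filter (fun v => degN T v = 1)).card
          + (Finset.univ.filter (fun v => degN T v = 2)).card + 1) / 2 ∧
      (∀ v, degN T v = 1 → ∃ p q, p ≠ q ∧ s(v, p) ∈ F ∧ s(v, q) ∈ F) ∧
      ∀ v, degN T v = 2 → ∃ p, s(v, p) ∈ F by
    obtain ⟨F, hF, hc, h1, h2⟩ := h
    refine ⟨F, hF, hc, fun v => ?_⟩
    have hpos := one_le_degN T hT hn v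
    by_cases hv1 : degN T v = 1
    · obtain ⟨p, q, hpq, hp, hq⟩ := h1 v hv1
      have := degN_add_le T F hF v {p, q} (by simp [hp, hq])
      rw [Finset.card_pair hpq] at this
      omega
    by_cases hv2 : degN T v = 2
    · obtain ⟨p, hp⟩ := h2 v hv2
      have := degN_add_le T F hF v {p} (by simp [hp])
      rw [Finset.card_singleton] at this
      omega
    have := degN_add_le T F hF v ∅ (by simp)
    rw [Finset.card_empty] at this
    omega
  have hL3 := three_le_card_leaves T hT hn hdeg3
  set L := Finset.univ.filter (fun v => degN T v = 1) with hL
  set S := Finset.univ.filter (fun v => degN T v = 2) with hS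
  have memL : ∀ v, v ∈ L ↔ degN T v = 1 := by simp [hL]
  have memS : ∀ v, v ∈ S ↔ degN T v = 2 := by simp [hS]
  have hLS : ∀ v ∈ L, v ∉ S := by
    intro v h1 h2
    rw [memL] at h1
    rw [memS] at h2
    omega
  obtain ⟨f, hfL, hfsL, hf1, hf2⟩ := exists_leaf_cycle L hL3
  set C : Finset (Sym2 V) := L.image (fun v => s(v, f v)) with hC
  have hinj : Set.InjOn (fun v => s(v, f v)) (L : Set V) := by
    intro v hv w hw h
    rcases Sym2.eq_iff.mp h with ⟨h1, -⟩ | ⟨h1, h2⟩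
    · exact h1
    · exact absurd (by rw [h2, ← h1]) (hf2 v hv)
  have hCc : C.card = L.card := Finset.card_image_of_injOn hinj
  have hCmem : ∀ e ∈ C, ¬ e.IsDiag ∧ e ∉ T.edgeSet ∧ ∀ v ∈ e, v ∈ L := by
    intro e he
    obtain ⟨v, hv, rfl⟩ := Finset.mem_image.mp he
    refine ⟨by simpa using (hf1 v hv).symm, ?_, ?_⟩
    · exact leaves_not_adj T hT hn ((memL _).mp hv) ((memL _).mp (hfL v hv))
    · intro w hw
      rcases Sym2.mem_iff.mp hw with rfl | rfl
      · exact hv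
      · exact hfL v hv
  have hCf : ∀ v ∈ L, s(v, f v) ∈ C := fun v hv => Finset.mem_image_of_mem _ hv
  have hCs : ∀ v ∈ L, s(v, f.symm v) ∈ C := by
    intro v hv
    have := hCf _ (hfsL v hv)
    rwa [f.apply_symm_apply, Sym2.eq_swap] at this
  have hfs : ∀ v ∈ L, f v ≠ f.symm v := by
    intro v hv h
    apply hf2 v hv
    rw [h, f.apply_symm_apply]
  by_cases hgood : S.card = 2 → ∀ a ∈ S, ∀ b ∈ S, ¬ T.Adj a b
  · obtain ⟨M, hMc, hM, hcov⟩ := exists_cover T hT hn S (fun v hv => (memS v).mp hv) hgood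
    have hdisj : Disjoint C M := by
      rw [Finset.disjoint_left]
      intro e heC heM
      obtain ⟨v, hve, hvS⟩ := (hM e heM).2.2
      exact hLS v ((hCmem e heC).2.2 v hve) hvS
    refine ⟨C ∪ M, ?_, ?_, ?_, ?_⟩
    · intro e he
      rcases Finset.mem_union.mp he with he | he
      · exact ⟨(hCmem e he).1, (hCmem e he).2.1⟩
      · exact ⟨(hM e he).1, (hM e he).2.1⟩
    · rw [Finset.card_union_of_disjoint hdisj]
      omega
    · intro v hv
      have hv := (memL v).mpr hv
      exact ⟨f v, f.symm v, hfs v hv, Finset.mem_union_left _ (hCf v hv),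
        Finset.mem_union_left _ (hCs v hv)⟩
    · intro v hv
      obtain ⟨p, hp⟩ := hcov v ((memS v).mpr hv)
      exact ⟨p, Finset.mem_union_right _ hp⟩
  · push Not at hgood
    obtain ⟨hS2, a, ha, b, hb, hab⟩ := hgood
    have hSab : ∀ v ∈ S, v = a ∨ v = b := by
      have : ({a, b} : Finset V) = S := Finset.eq_of_subset_of_card_le
        (by intro x hx; rcases Finset.mem_insert.mp hx with rfl | hx
            · exact ha
            · rw [Finset.mem_singleton.mp hx]; exact hb)
        (by rw [hS2, Finset.card_pair hab.ne])
      intro v hv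
      rw [← this] at hv
      simpa using hv
    -- Besides each other, `a` and `b` have only one neighbour each.
    have huniq : ∀ a b, a ∈ S → b ∈ S → T.Adj a b → ∀ x ∈ L, ∀ y ∈ L, T.Adj a x →
        T.Adj a y → x = y := by
      intro a b ha hb hab x hx y hy h1 h2
      by_contra hxy
      have hbx : b ≠ x := by rintro rfl; exact hLS _ hx hb
      have hby : b ≠ y := by rintro rfl; exact hLS _ hy hb
      have := three_le_degN T hab h1 h2 hbx hby hxy
      have := (memS a).mp ha
      omega
    obtain ⟨x, hx, hxa, hxb⟩ : ∃ x ∈ L, ¬ T.Adj a x ∧ ¬ T.Adj b (f x) := by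
      by_contra! h
      obtain ⟨x, y, z, hx, hy, hz, hxy, hxz, hyz⟩ := Finset.two_lt_card_iff.mp hL3
      have hA := huniq a b ha hb hab
      have hB : ∀ u ∈ L, ∀ w ∈ L, T.Adj b (f u) → T.Adj b (f w) → u = w :=
        fun u hu w hw h1 h2 => f.injective
          (huniq b a hb ha hab.symm _ (hfL u hu) _ (hfL w hw) h1 h2)
      have a1 := hA x hx y hy
      have a2 := hA x hx z hz
      have a3 := hA y hy z hz
      have b1 := hB x hx y hy
      have b2 := hB x hx z hz
      have b3 := hB y hy z hz
      have c1 := h x hx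
      have c2 := h y hy
      have c3 := h z hz
      clear * - a1 a2 a3 b1 b2 b3 c1 c2 c3 hxy hxz hyz
      tauto
    have hxL := hLS x hx
    have hfxL := hLS _ (hfL x hx)
    have hax : a ≠ x := by rintro rfl; exact hxL ha
    have hbx : b ≠ f x := by intro h; exact hfxL (h ▸ hb)
    have hnotC : ∀ u ∈ S, ∀ w, s(u, w) ∉ C := by
      intro u hu w h
      exact hLS u ((hCmem _ h).2.2 u (Sym2.mem_mk_left u w)) hu
    have hn1 : s(b, f x) ∉ C.erase s(x, f x) :=
      fun h => hnotC b hb _ (Finset.mem_of_mem_erase h)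
    have hn2 : s(a, x) ∉ insert s(b, f x) (C.erase s(x, f x)) := by
      intro h
      rcases Finset.mem_insert.mp h with h | h
      · rcases Sym2.eq_iff.mp h with ⟨h1, -⟩ | ⟨-, h1⟩
        · exact hab.ne h1
        · exact hxL (h1 ▸ hb)
      · exact hnotC a ha _ (Finset.mem_of_mem_erase h)
    refine ⟨insert s(a, x) (insert s(b, f x) (C.erase s(x, f x))), ?_, ?_, ?_, ?_⟩
    · intro e he
      rcases Finset.mem_insert.mp he with rfl | he
      · exact ⟨by simpa using hax, hxa⟩
      rcases Finset.mem_insert.mp he with rfl | he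
      · exact ⟨by simpa using hbx, hxb⟩
      have := hCmem e (Finset.mem_of_mem_erase he)
      exact ⟨this.1, this.2.1⟩
    · rw [Finset.card_insert_of_notMem hn2, Finset.card_insert_of_notMem hn1,
        Finset.card_erase_of_mem (hCf x hx)]
      omega
    · intro v hv
      have hv := (memL v).mpr hv
      have lift : ∀ e ∈ C, e ≠ s(x, f x) →
          e ∈ insert s(a, x) (insert s(b, f x) (C.erase s(x, f x))) := fun e he hne =>
        Finset.mem_insert_of_mem (Finset.mem_insert_of_mem (Finset.mem_erase.mpr ⟨hne, he⟩))
      by_cases hvx : v = x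
      · subst hvx
        refine ⟨a, f.symm v, ?_, by simp [Sym2.eq_swap], lift _ (hCs v hv) ?_⟩
        · intro h
          exact hLS _ (hfsL v hv) (h ▸ ha)
        · intro h
          rcases Sym2.eq_iff.mp h with ⟨-, h1⟩ | ⟨h1, -⟩
          · exact hfs v hv h1.symm
          · exact hf1 v hv h1.symm
      by_cases hvf : v = f x
      · subst hvf
        refine ⟨b, f (f x), ?_, by simp [Sym2.eq_swap], lift _ (hCf _ hv) ?_⟩
        · intro h
          exact hLS _ (hfL _ hv) (h ▸ hb)
        · intro h
          rcases Sym2.eq_iff.mp h with ⟨h1, -⟩ | ⟨-, h1⟩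
          · exact hf1 x hx h1
          · exact hf2 x hx h1
      have hne : ∀ w, s(v, w) ≠ s(x, f x) := by
        intro w h
        rcases Sym2.eq_iff.mp h with ⟨h1, -⟩ | ⟨h1, -⟩
        · exact hvx h1
        · exact hvf h1
      exact ⟨f v, f.symm v, hfs v hv, lift _ (hCf v hv) (hne _), lift _ (hCs v hv) (hne _)⟩
    · intro v hv
      rcases hSab v ((memS v).mpr hv) with rfl | rfl
      · exact ⟨x, by simp⟩
      · exact ⟨f x, by simp⟩
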